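/- arXiv:2406.14587 — 3 statements merged into one kernel-verified Lean document; each statement's English description precedes it below -/
import Mathlib

section
/- In the 3-player deterministic graphical game described in the context, merge the three cyclic outcomes into a single outcome c, i.e., define g'(x) = a1 or a2 if the play p(x) reaches that terminal, and g'(x) = c if the play cycles. Then for every triple of strict linear orders ≻₁, ≻₂, ≻₃ on the merged outcome set {a1, a2, c}, the merged game has a Nash equilibrium: there is a strategy profile x such that no player i can obtain an outcome strictly preferred under ≻ᵢ by unilaterally changing their own strategy. -/
/-- Vertices of the digraph of the main example. -/
inductive GVertex : Type
  | s1 | u1 | v1 | u2 | v2 | u3 | v3 | a1 | a2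
  deriving DecidableEq

/-- Merged outcomes: the two terminals `a1`, `a2` and a single cyclic outcome `c`
obtained by merging the three cyclic outcomes. -/
inductive MOutcome : Type
  | a1 | a2 | c
  deriving DecidableEq

/-- Strategies of player 1: a move at each of s1 (3 choices), u1 (2), v1 (2). -/
abbrev Strat1 := Fin 3 × Fin 2 × Fin 2
/-- Strategies of player 2: a move at each of u2 (2 choices), v2 (2). -/
abbrev Strat2 := Fin 2 × Fin 2
/-- Strategies of player 3: a move at each of u3 (2 choices), v3 (2). -/
abbrev Strat3 := Fin 2 × Fin 2

/-- The successor function on vertices defined by a strategy profile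
(terminals are fixed points). -/
def gstep (x : Strat1 × Strat2 × Strat3) : GVertex → GVertex
  | .s1 => if x.1.1 = 0 then .u2 else if x.1.1 = 1 then .v1 else .v2
  | .u1 => if x.1.2.1 = 0 then .u2 else .v1
  | .v1 => if x.1.2.2 = 0 then .u3 else .v2
  | .u2 => if x.2.1.1 = 0 then .u1 else .u3
  | .v2 => if x.2.1.2 = 0 then .v3 else .a1
  | .u3 => if x.2.2.1 = 0 then .v1 else .v3
  | .v3 => if x.2.2.2 = 0 then .v2 else .a2
  | .a1 => .a1
  | .a2 => .a2

/-- Classification of a vertex of the eventual periodic part of a play: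
after sufficiently many steps the play sits at a terminal or inside one of the
three 2-cycles {u1,u2}, {v1,u3}, {v2,v3}; all cyclic outcomes are merged
into the single outcome `c`.  (The value at `s1` is irrelevant: `s1` has no
incoming edges and is never a fixed point.) -/
def mclassify : GVertex → MOutcome
  | .s1 => .c
  | .u1 => .c
  | .u2 => .c
  | .v1 => .c
  | .u3 => .c
  | .v2 => .c
  | .v3 => .c
  | .a1 => .a1
  | .a2 => .a2

/-- The merged outcome of a strategy profile: the play starting at `s1` needs
at most 9 steps to enter its periodic part (a terminal loop or a 2-cycle). -/
def moutcome (x : Strat1 × Strat2 × Strat3) : MOutcome :=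
  mclassify ((gstep x)^[9] GVertex.s1)

/-- After merging the three cyclic outcomes into one, the game of the main
example is Nash-solvable: for every triple of strict linear (i.e. strict total)
preference orders on the merged outcome set {a1, a2, c} there is a strategy
profile that no player can improve by a unilateral deviation. -/
theorem merged_game_Nash_solvable (pref : Fin 3 → MOutcome → MOutcome → Prop)
    (hpref : ∀ i, IsStrictTotalOrder MOutcome (pref i)) :
    ∃ x : Strat1 × Strat2 × Strat3,
      (∀ y1 : Strat1, ¬ pref 0 (moutcome (y1, x.2)) (moutcome x)) ∧
      (∀ y2 : Strat2, ¬ pref 1 (moutcome (x.1, y2, x.2.2)) (moutcome x)) ∧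
      (∀ y3 : Strat3, ¬ pref 2 (moutcome (x.1, x.2.1, y3)) (moutcome x)) := by
  have h1 : ∀ y1 : Strat1, moutcome (y1, (0, 0), (0, 0)) = .c := by decide
  have h2 : ∀ y2 : Strat2, moutcome ((0, 0, 0), y2, (0, 0)) = .c := by decide
  have h3 : ∀ y3 : Strat3, moutcome ((0, 0, 0), (0, 0), y3) = .c := by decide
  have irr : ∀ i, ¬ pref i .c .c := fun i => (hpref i).irrefl _
  refine ⟨((0, 0, 0), (0, 0), (0, 0)), fun y => ?_, fun y => ?_, fun y => ?_⟩
  · rw [h1 y, h1]; exact irr 0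
  · rw [h2 y, h1]; exact irr 1
  · rw [h3 y, h1]; exact irr 2
end

section
/- Every 2-person deterministic graphical game has a Nash equilibrium in pure stationary strategies: for n = 2, for every DG game structure (G, partition, initial position v0) and every payoff u : {1,2} × Ω → ℝ, there exists a strategy profile x = (x₁, x₂) such that for each player i ∈ {1,2} and each profile x' differing from x only in player i's strategy, u(i, g(x)) ≥ u(i, g(x')). -/
open Relation

/-- A vertex is terminal iff it has no outgoing edge. -/
def isTerminal {V : Type*} (E : V → V → Prop) (v : V) : Prop := ∀ w, ¬ E v w

/-- The strongly connected component of `v`: all vertices mutually reachable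
with `v` (reachability = reflexive-transitive closure of `E`). -/
def scc {V : Type*} (E : V → V → Prop) (v : V) : Set V :=
  {w | ReflTransGen E v w ∧ ReflTransGen E w v}

/-- A strategy profile, encoded as a global successor function: at every
non-terminal position it follows an edge chosen by the controlling player,
and it fixes the terminal positions. -/
def ValidProfile {V : Type*} (E : V → V → Prop) (s : V → V) : Prop :=
  ∀ v, (isTerminal E v → s v = v) ∧ (¬ isTerminal E v → E v (s v))

/-- The outcome of a strategy profile `s` from the initial position `v0`:
after `|V|` steps the play `v0, s v0, s (s v0), …` has entered its periodic
part (the terminal vertex reached, or the eventual directed cycle), and the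
outcome is the strongly connected component containing it. -/
def outcome {V : Type*} [Fintype V] (E : V → V → Prop) (v0 : V) (s : V → V) :
    Set V :=
  scc E (s^[Fintype.card V] v0)

/-- `x` is a Nash equilibrium (in pure stationary strategies): no player `i`
can strictly increase their payoff by a unilateral deviation, i.e. by
switching to a valid profile that agrees with `x` at every position not
controlled by `i`. -/
def IsNE {V : Type*} [Fintype V] (E : V → V → Prop) {n : ℕ}
    (control : V → Fin n) (v0 : V) (u : Fin n → Set V → ℝ) (x : V → V) : Prop :=
  ∀ (i : Fin n) (x' : V → V), ValidProfile E x' →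
    (∀ v, control v ≠ i → x' v = x v) →
    u i (outcome E v0 x) ≥ u i (outcome E v0 x')

/-- Two-person tight game forms are Nash-solvable. -/
theorem tight_step {X Y Ω : Type*} [Finite Ω] (g : X → Y → Ω)
    (u1 u2 : Ω → ℝ)
    (tight : ∀ S : Set Ω, (∃ x, ∀ y, g x y ∈ S) ∨ (∃ y, ∀ x, g x y ∉ S)) :
    ∀ (n : ℕ) (A : Set Ω) (α μ : ℝ), {w | α < u1 w}.ncard = n →
      (¬ ∃ x, ∀ y, g x y ∈ A) → (∃ x, ∀ y, g x y ∈ A ∪ {w | α < u1 w}) →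
      A = (A ∪ {w | α < u1 w}) ∩ {w | u2 w < μ} →
      ∃ x y, (∀ x', u1 (g x' y) ≤ u1 (g x y)) ∧ (∀ y', u2 (g x y') ≤ u2 (g x y)) := by
  intro n
  induction n using Nat.strong_induction_on with
  | _ n ih =>
  intro A α μ hn hA hD hAμ
  set D : Set Ω := A ∪ {w | α < u1 w} with hDdef
  -- find minimal m
  have hne : {w : Ω | ∃ x, ∀ y, g x y ∈ D ∩ {z | u2 z ≤ u2 w}}.Nonempty := by
    obtain ⟨x, hx⟩ := hD
    have hY : Nonempty Y := by
      by_contra h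
      exact hA ⟨x, fun y => (h ⟨y⟩).elim⟩
    have : Nonempty Ω := ⟨g x hY.some⟩
    obtain ⟨w, hw⟩ := Finite.exists_max u2
    exact ⟨w, x, fun y => ⟨hx y, hw _⟩⟩
  obtain ⟨wm, ⟨x, hx⟩, hmin⟩ := Set.exists_min_image _ u2 (Set.toFinite _) hne
  set m := u2 wm with hm
  have hA' : ¬ ∃ x, ∀ y, g x y ∈ D ∩ {z | u2 z < m} := by
    rintro ⟨x', hx'⟩
    by_cases hne' : (D ∩ {z | u2 z < m}).Nonempty
    · obtain ⟨z, hz, hzmax⟩ := Set.exists_max_image _ u2 (Set.toFinite _) hne'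
      have := hmin z ⟨x', fun y => ⟨(hx' y).1, hzmax _ (hx' y)⟩⟩
      exact absurd hz.2 (not_lt.mpr this)
    · exact hA ⟨x', fun y => (hne' ⟨_, hx' y⟩).elim⟩
  have hL : (D ∩ {z | u2 z = m}).Nonempty := by
    by_contra h
    refine hA' ⟨x, fun y => ⟨(hx y).1, lt_of_le_of_ne (hx y).2 fun e => h ⟨_, (hx y).1, e⟩⟩⟩
  obtain ⟨l, ⟨hlD, hlm⟩, hlmin⟩ := Set.exists_min_image _ u1 (Set.toFinite _) hL
  have hμm : μ ≤ m := by
    by_contra h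
    push Not at h
    apply hA
    refine ⟨x, fun y => ?_⟩
    rw [hAμ]
    exact ⟨(hx y).1, lt_of_le_of_lt (hx y).2 h⟩
  have hlα : α < u1 l := by
    rcases hlD with h | h
    · rw [hAμ] at h
      have h2 : u2 l < μ := h.2
      have h3 : u2 l = m := hlm
      linarith
    · exact h
  by_cases hC : ∃ x, ∀ y, g x y ∈ (D ∩ {z | u2 z < m}) ∪ {w | u1 l < u1 w}
  · refine ih _ ?_ (D ∩ {z | u2 z < m}) (u1 l) m rfl hA' hC ?_
    · rw [← hn]
      apply Set.ncard_lt_ncard _ (Set.toFinite _)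
      refine ⟨fun w hw => lt_trans hlα hw, fun h => ?_⟩
      have h5 : u1 l < u1 l := h hlα
      exact lt_irrefl _ h5
    · ext w
      constructor
      · intro h
        exact ⟨Or.inl h, h.2⟩
      · rintro ⟨h | h, h'⟩
        · exact h
        · exact ⟨Or.inr (lt_trans hlα h), h'⟩
  · obtain ⟨y, hy⟩ := (tight _).resolve_left hC
    have key : ∀ x', u1 (g x' y) ≤ u1 l := fun x' => by
      by_contra h
      exact hy x' (Or.inr (not_le.mp h))
    have h2 : u2 (g x y) = m := by
      apply le_antisymm (hx y).2
      by_contra h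
      exact hy x (Or.inl ⟨(hx y).1, not_le.mp h⟩)
    refine ⟨x, y, fun x' => (key x').trans (hlmin _ ⟨(hx y).1, h2⟩), fun y' => ?_⟩
    rw [h2]
    exact (hx y').2

theorem tight_NE {X Y Ω : Type*} [Finite Ω] [Nonempty X] [Nonempty Y] (g : X → Y → Ω)
    (u1 u2 : Ω → ℝ)
    (tight : ∀ S : Set Ω, (∃ x, ∀ y, g x y ∈ S) ∨ (∃ y, ∀ x, g x y ∉ S)) :
    ∃ x y, (∀ x', u1 (g x' y) ≤ u1 (g x y)) ∧ (∀ y', u2 (g x y') ≤ u2 (g x y)) := by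
  have : Nonempty Ω := ⟨g (Classical.arbitrary X) (Classical.arbitrary Y)⟩
  obtain ⟨w1, h1⟩ := Finite.exists_min u1
  obtain ⟨w2, h2⟩ := Finite.exists_min u2
  refine tight_step g u1 u2 tight _ ∅ (u1 w1 - 1) (u2 w2) rfl ?_ ?_ ?_
  · rintro ⟨x, hx⟩
    exact hx (Classical.arbitrary Y)
  · refine ⟨Classical.arbitrary X, fun y => Or.inr ?_⟩
    have := h1 (g (Classical.arbitrary X) y)
    show u1 w1 - 1 < _
    linarith
  · ext w
    have := h2 w
    simp [this]

/-- A winning certificate for player `p` on the region `W`, with target colour `G`. -/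
def WinCert {V : Type*} (E : V → V → Prop) (control : V → Fin 2) (p : Fin 2)
    (G W : Set V) : Prop :=
  ∃ ρ : V → ℕ, ∀ v ∈ W, (isTerminal E v → v ∈ G) ∧
    (control v = p → ¬ isTerminal E v → ∃ w, E v w ∧ w ∈ W ∧ (v ∉ G → ρ w < ρ v)) ∧
    (control v ≠ p → ∀ w, E v w → w ∈ W ∧ (v ∉ G → ρ w < ρ v))

theorem iter_reach {V : Type*} {E : V → V → Prop} {x : V → V} (hx : ValidProfile E x)
    (v : V) (n : ℕ) : ReflTransGen E v (x^[n] v) := by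
  induction n with
  | zero => exact .refl
  | succ n ih =>
    rw [Function.iterate_succ_apply']
    by_cases h : isTerminal E (x^[n] v)
    · rw [(hx _).1 h]; exact ih
    · exact ih.tail ((hx _).2 h)

theorem iter_periodic {V : Type*} [Fintype V] (x : V → V) (v : V) :
    ∃ k, 0 < k ∧ x^[k] (x^[Fintype.card V] v) = x^[Fintype.card V] v := by
  obtain ⟨i, j, hij, h⟩ := Fintype.exists_ne_map_eq_of_card_lt
    (fun i : Fin (Fintype.card V + 1) => x^[i.1] v) (by simp)
  wlog hlt : i < j generalizing i j
  · exact this j i hij.symm h.symm (lt_of_le_of_ne (not_lt.mp hlt) hij.symm)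
  have hlt' : i.1 < j.1 := hlt
  have hi := i.2
  refine ⟨j.1 - i.1, by omega, ?_⟩
  rw [← Function.iterate_add_apply]
  rw [show j.1 - i.1 + Fintype.card V = (Fintype.card V - i.1) + j.1 by omega,
    Function.iterate_add_apply, ← h, ← Function.iterate_add_apply]
  congr 2
  omega

theorem scc_eq {V : Type*} {E : V → V → Prop} {v w : V} (h1 : ReflTransGen E v w)
    (h2 : ReflTransGen E w v) : scc E v = scc E w := by
  ext z
  exact ⟨fun h => ⟨h2.trans h.1, h.2.trans h1⟩, fun h => ⟨h1.trans h.1, h.2.trans h2⟩⟩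

theorem exists_valid {V : Type*} (E : V → V → Prop) : ∃ x, ValidProfile E x := by
  have : ∀ v, ∃ w, (isTerminal E v → w = v) ∧ (¬ isTerminal E v → E v w) := by
    intro v
    by_cases h : isTerminal E v
    · exact ⟨v, fun _ => rfl, fun h' => (h' h).elim⟩
    · have h' := h
      unfold isTerminal at h'
      push Not at h'
      obtain ⟨w, hw⟩ := h'
      exact ⟨w, fun h'' => (h h'').elim, fun _ => hw⟩
  choose x hx using this
  exact ⟨x, hx⟩

theorem cert_sound {V : Type*} [Fintype V] {E : V → V → Prop} {control : V → Fin 2}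
    {p : Fin 2} {G W : Set V}
    (hG : ∀ v w, scc E v = scc E w → v ∈ G → w ∈ G)
    (hW : WinCert E control p G W) {v0 : V} (hv0 : v0 ∈ W) :
    ∃ s, ValidProfile E s ∧ ∀ x, ValidProfile E x → (∀ v, control v = p → x v = s v) →
      x^[Fintype.card V] v0 ∈ G := by
  obtain ⟨ρ, hρ⟩ := hW
  obtain ⟨s0, hs0⟩ := exists_valid E
  have : ∀ v, ∃ w, (isTerminal E v → w = v) ∧ (¬ isTerminal E v → E v w) ∧
      (v ∈ W → control v = p → ¬ isTerminal E v → w ∈ W ∧ (v ∉ G → ρ w < ρ v)) := by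
    intro v
    by_cases h : v ∈ W ∧ control v = p ∧ ¬ isTerminal E v
    · obtain ⟨w, h1, h2⟩ := (hρ v h.1).2.1 h.2.1 h.2.2
      exact ⟨w, fun h' => (h.2.2 h').elim, fun _ => h1, fun _ _ _ => h2⟩
    · exact ⟨s0 v, (hs0 v).1, (hs0 v).2, fun h1 h2 h3 => (h ⟨h1, h2, h3⟩).elim⟩
  choose s hs using this
  refine ⟨s, fun v => ⟨(hs v).1, (hs v).2.1⟩, fun x hx hxs => ?_⟩
  have step : ∀ v ∈ W, ¬ isTerminal E v → x v ∈ W ∧ (v ∉ G → ρ (x v) < ρ v) := by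
    intro v hv ht
    by_cases hc : control v = p
    · rw [hxs v hc]; exact (hs v).2.2 hv hc ht
    · exact (hρ v hv).2.2 hc _ ((hx v).2 ht)
  have inW : ∀ n, x^[n] v0 ∈ W := by
    intro n
    induction n with
    | zero => exact hv0
    | succ n ih =>
      rw [Function.iterate_succ_apply']
      by_cases h : isTerminal E (x^[n] v0)
      · rw [(hx _).1 h]; exact ih
      · exact (step _ ih h).1
  by_contra hbad
  obtain ⟨k, hk, hper⟩ := iter_periodic x v0
  have hw : ∀ n, x^[n] (x^[Fintype.card V] v0) ∈ W := fun n => by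
    rw [← Function.iterate_add_apply]; exact inW _
  generalize x^[Fintype.card V] v0 = w at hbad hper hw
  have bad : ∀ n, x^[n] w ∉ G := by
    intro n hn
    refine hbad (hG _ _ (scc_eq ?_ (iter_reach hx w n)) hn)
    have h1 : x^[k * n] w = w := by
      rw [Function.iterate_mul]
      exact Function.iterate_fixed hper n
    have h2 := iter_reach hx (x^[n] w) (k * n - n)
    rw [← Function.iterate_add_apply, Nat.sub_add_cancel (Nat.le_mul_of_pos_left n hk), h1] at h2
    exact h2
  have dec : ∀ n, ρ (x^[n + 1] w) + n + 1 ≤ ρ w := by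
    intro n
    have hd : ∀ n, ρ (x^[n + 1] w) < ρ (x^[n] w) := fun n => by
      rw [Function.iterate_succ_apply']
      exact (step _ (hw n) fun ht => bad n ((hρ _ (hw n)).1 ht)).2 (bad n)
    induction n with
    | zero => exact hd 0
    | succ n ih => have := hd (n + 1); omega
  have := dec (k - 1)
  rw [Nat.sub_add_cancel hk, hper] at this
  omega

theorem cert_extend {V : Type*} [Fintype V] {E : V → V → Prop} {control : V → Fin 2}
    {p : Fin 2} {G W : Set V} (hW : WinCert E control p G W) (a : V)
    (hnt : ¬ isTerminal E a)
    (h1 : control a = p → ∃ w, E a w ∧ w ∈ W)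
    (h2 : control a ≠ p → ∀ w, E a w → w ∈ W) (ha : a ∉ W) :
    WinCert E control p G (insert a W) := by
  classical
  obtain ⟨ρ, hρ⟩ := hW
  have hlt : ∀ w, ρ w < ∑ z, ρ z + 1 := fun w =>
    Nat.lt_succ_of_le (Finset.single_le_sum (fun _ _ => Nat.zero_le _) (Finset.mem_univ w))
  have hne : ∀ w ∈ W, w ≠ a := fun w hw e => ha (e ▸ hw)
  refine ⟨fun v => if v = a then ∑ z, ρ z + 1 else ρ v, ?_⟩
  rintro v (rfl | hv)
  · refine ⟨fun h => (hnt h).elim, fun hc _ => ?_, fun hc w hw => ?_⟩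
    · obtain ⟨w, hw, hwW⟩ := h1 hc
      refine ⟨w, hw, Or.inr hwW, fun _ => ?_⟩
      simp only [hne w hwW, if_true, if_false]
      exact hlt w
    · have hwW := h2 hc w hw
      refine ⟨Or.inr hwW, fun _ => ?_⟩
      simp only [hne w hwW, if_true, if_false]
      exact hlt w
  · obtain ⟨a1, a2, a3⟩ := hρ v hv
    refine ⟨a1, fun hc ht => ?_, fun hc w hw => ?_⟩
    · obtain ⟨w, hw, hwW, h⟩ := a2 hc ht
      refine ⟨w, hw, Or.inr hwW, ?_⟩
      simpa only [hne w hwW, hne v hv, if_false] using h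
    · obtain ⟨hwW, h⟩ := a3 hc w hw
      refine ⟨Or.inr hwW, ?_⟩
      simpa only [hne w hwW, hne v hv, if_false] using h

theorem cert_max {V : Type*} [Fintype V] (E : V → V → Prop) (control : V → Fin 2)
    (p : Fin 2) (G : Set V) :
    ∃ W, WinCert E control p G W ∧ (∀ W', WinCert E control p G W' → W ⊆ W' → W' ⊆ W) := by
  obtain ⟨W, hW⟩ := Set.Finite.exists_maximal (s := {W : Set V | WinCert E control p G W})
    (Set.toFinite _) ⟨∅, fun _ => 0, fun v hv => hv.elim⟩
  exact ⟨W, hW.1, fun W' h h' => hW.2 h h'⟩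

/-- Adding the uncertified part of a minimal SCC. -/
theorem cert_add {V : Type*} [Fintype V] {E : V → V → Prop} {control : V → Fin 2}
    {p q : Fin 2} (hpq : ∀ i, i ≠ p ↔ i = q) {G H W Z K : Set V}
    (hW : WinCert E control p G W)
    (hZ : WinCert E control q H Z)
    (hZm : ∀ W', WinCert E control q H W' → Z ⊆ W' → W' ⊆ Z)
    (hK : K ⊆ G) (hKZ : ∀ v ∈ K, v ∉ Z)
    (hE : ∀ v ∈ K, ∀ w, E v w → w ∈ W ∨ w ∈ Z ∨ w ∈ K) :
    WinCert E control p G (W ∪ K) := by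
  have hqp : ∀ i, i ≠ q ↔ i = p := fun i => by
    have := hpq i
    tauto
  obtain ⟨ρ, hρ⟩ := hW
  refine ⟨ρ, ?_⟩
  rintro v (hv | hv)
  · obtain ⟨a1, a2, a3⟩ := hρ v hv
    refine ⟨a1, fun hc ht => ?_, fun hc w hw => ?_⟩
    · obtain ⟨w, hw, hwW, h⟩ := a2 hc ht
      exact ⟨w, hw, Or.inl hwW, h⟩
    · obtain ⟨hwW, h⟩ := a3 hc w hw
      exact ⟨Or.inl hwW, h⟩
  · refine ⟨fun _ => hK hv, fun hc ht => ?_, fun hc w hw => ⟨?_, fun h => (h (hK hv)).elim⟩⟩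
    · by_contra hno
      apply hKZ v hv
      refine hZm _ (cert_extend hZ v ht (fun h => absurd hc ((hpq _).mpr h))
        (fun _ w hw => ?_) (hKZ v hv)) (Set.subset_insert _ _) (Set.mem_insert _ _)
      rcases hE v hv w hw with h | h | h
      · exact (hno ⟨w, hw, Or.inl h, fun h => (h (hK hv)).elim⟩).elim
      · exact h
      · exact (hno ⟨w, hw, Or.inr h, fun h => (h (hK hv)).elim⟩).elim
    · rcases hE v hv w hw with h | h | h
      · exact Or.inl h
      · exfalso
        apply hKZ v hv
        exact hZm _ (cert_extend hZ v (fun ht => ht w hw) (fun _ => ⟨w, hw, h⟩)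
          (fun h' => absurd ((hqp _).mp h') hc) (hKZ v hv))
          (Set.subset_insert _ _) (Set.mem_insert _ _)
      · exact Or.inr h

theorem determinacy {V : Type*} [Fintype V] (E : V → V → Prop) (control : V → Fin 2)
    (G : Set V) (hG : ∀ v w, scc E v = scc E w → v ∈ G → w ∈ G) (v0 : V) :
    (∃ W, WinCert E control 0 G W ∧ v0 ∈ W) ∨ (∃ W, WinCert E control 1 Gᶜ W ∧ v0 ∈ W) := by
  obtain ⟨W, hW, hWm⟩ := cert_max E control 0 G
  obtain ⟨Z, hZ, hZm⟩ := cert_max E control 1 Gᶜ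
  suffices h : ∀ v, v ∈ W ∨ v ∈ Z by
    rcases h v0 with h | h
    · exact Or.inl ⟨W, hW, h⟩
    · exact Or.inr ⟨Z, hZ, h⟩
  by_contra hcon
  have hne : {v | v ∉ W ∧ v ∉ Z}.Nonempty := by
    push Not at hcon
    exact hcon
  obtain ⟨v, ⟨hvW, hvZ⟩, hmin⟩ := Set.exists_min_image _
    (fun v => {w | ReflTransGen E v w}.ncard) (Set.toFinite _) hne
  set K : Set V := {w | (w ∉ W ∧ w ∉ Z) ∧ scc E v = scc E w} with hKdef
  have hvK : v ∈ K := ⟨⟨hvW, hvZ⟩, rfl⟩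
  have hE : ∀ a ∈ K, ∀ w, E a w → w ∈ W ∨ w ∈ Z ∨ w ∈ K := by
    rintro a ⟨ha, hav⟩ w hw
    by_contra hno
    push Not at hno
    have hva : ReflTransGen E v a := by
      have : a ∈ scc E a := ⟨.refl, .refl⟩
      rw [← hav] at this
      exact this.1
    have hvw := hva.tail hw
    have hle := hmin w ⟨hno.1, hno.2.1⟩
    have heq : {z | ReflTransGen E w z} = {z | ReflTransGen E v z} :=
      Set.eq_of_subset_of_ncard_le (fun z hz => hvw.trans hz) hle (Set.toFinite _)
    have hwv : v ∈ {z | ReflTransGen E w z} := by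
      rw [heq]; exact ReflTransGen.refl
    exact hno.2.2 ⟨⟨hno.1, hno.2.1⟩, scc_eq hvw hwv⟩
  by_cases hvG : v ∈ G
  · have hc := cert_add (p := 0) (q := 1) (by decide) hW hZ hZm (K := K)
      (fun a ha => hG _ _ ha.2 hvG) (fun a ha => ha.1.2) hE
    exact hvW (hWm _ hc Set.subset_union_left (Or.inr hvK))
  · have hc := cert_add (p := 1) (q := 0) (by decide) hZ hW hWm (K := K)
      (fun a ha h => hvG (hG _ _ ha.2.symm h)) (fun a ha => ha.1.1)
      (fun a ha w hw => by have := hE a ha w hw; tauto)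
    exact hvZ (hZm _ hc Set.subset_union_left (Or.inr hvK))

/-- Every 2-person deterministic graphical game has a Nash equilibrium in
pure stationary strategies. -/
theorem two_person_DG_game_Nash_solvable {V : Type*} [Fintype V]
    (E : V → V → Prop) (control : V → Fin 2) (v0 : V)
    (hv0 : ¬ isTerminal E v0) (u : Fin 2 → Set V → ℝ) :
    ∃ x : V → V, ValidProfile E x ∧ IsNE E control v0 u x := by
  classical
  let X := {s : V → V // ValidProfile E s}
  have : Nonempty X := let ⟨s, hs⟩ := exists_valid E; ⟨⟨s, hs⟩⟩
  let mg : X → X → V → V := fun s t v => if control v = 0 then s.1 v else t.1 v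
  have hmg : ∀ s t, ValidProfile E (mg s t) := by
    intro s t v
    by_cases h : control v = 0
    · simpa only [mg, h, if_true] using s.2 v
    · simpa only [mg, h, if_false] using t.2 v
  have h01 : ∀ i : Fin 2, i ≠ 0 ↔ i = 1 := by decide
  obtain ⟨s, t, h1, h2⟩ := tight_NE (fun s t : X => outcome E v0 (mg s t)) (u 0) (u 1) (by
    intro S
    have hG : ∀ v w, scc E v = scc E w → v ∈ {v | scc E v ∈ S} → w ∈ {v | scc E v ∈ S} := by
      intro v w h hv
      simpa only [Set.mem_ofPred_eq, ← h] using hv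
    rcases determinacy E control {v | scc E v ∈ S} hG v0 with ⟨W, hW, hv⟩ | ⟨W, hW, hv⟩
    · left
      obtain ⟨s, hs, h⟩ := cert_sound hG hW hv
      refine ⟨⟨s, hs⟩, fun t => h _ (hmg _ t) fun v hc => ?_⟩
      simp only [mg, hc, if_true]
    · right
      obtain ⟨s, hs, h⟩ := cert_sound (G := {v | scc E v ∈ S}ᶜ) (fun v w h hv hw => hv (hG _ _ h.symm hw)) hW hv
      refine ⟨⟨s, hs⟩, fun t => h _ (hmg t _) fun v hc => ?_⟩
      simp only [mg, (h01 _).mpr hc, if_false])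
  refine ⟨mg s t, hmg s t, fun i x' hx' hag => ?_⟩
  by_cases hi : i = 0
  · subst hi
    have : mg ⟨x', hx'⟩ t = x' := by
      funext v
      by_cases h : control v = 0
      · simp only [mg, h, if_true]
      · rw [hag v h]; simp only [mg, h, if_false]
    have h := h1 ⟨x', hx'⟩
    simp only [this] at h
    exact h
  · have hi1 := (h01 i).mp hi
    subst hi1
    have : mg s ⟨x', hx'⟩ = x' := by
      funext v
      by_cases h : control v = 0
      · rw [hag v (by rw [h]; decide)]; simp only [mg, h, if_true]
      · simp only [mg, h, if_false]
    have h := h2 ⟨x', hx'⟩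
    simp only [this] at h
    exact h
end

section
/- Deleting the worse of two terminal moves creates no new Nash equilibrium: let a DG game with payoff u have a position v ∈ Vᵢ with two edges (v, t), (v, t') ∈ E where t and t' are terminal vertices and u(i, t) > u(i, t'). Let the reduced game be obtained by deleting the edge (v, t') (the vertex v retains the outgoing edge (v, t), all other data unchanged). Then every Nash equilibrium of the reduced game is also a Nash equilibrium of the original game. In particular, if the original game is NE-free, so is the reduced game. -/
open Relation

theorem aux_rtg {V : Type*} (E : V → V → Prop) (v t' : V) (hter' : isTerminal E t')
    {a b : V} (h : ReflTransGen E a b) :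
    ReflTransGen (fun a b => E a b ∧ ¬ (a = v ∧ b = t')) a b ∨ b = t' := by
  induction h with
  | refl => exact Or.inl ReflTransGen.refl
  | @tail b c h1 h2 ih =>
    by_cases hc : c = t'
    · exact Or.inr hc
    · rcases ih with ih | ih
      · exact Or.inl (ih.tail ⟨h2, fun h => hc h.2⟩)
      · subst ih
        exact absurd h2 (hter' c)

theorem aux_term {V : Type*} (E : V → V → Prop) (t' : V) (hter' : isTerminal E t')
    {a : V} (h : ReflTransGen E t' a) : a = t' := by
  induction h with
  | refl => rfl
  | tail h1 h2 ih => subst ih; exact absurd h2 (hter' _)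

theorem aux_scc {V : Type*} (E : V → V → Prop) (v t' : V) (hter' : isTerminal E t') (a : V) :
    scc (fun a b => E a b ∧ ¬ (a = v ∧ b = t')) a = scc E a := by
  ext w
  constructor
  · rintro ⟨h1, h2⟩
    exact ⟨ReflTransGen.mono (fun _ _ h => h.1) _ _ h1, ReflTransGen.mono (fun _ _ h => h.1) _ _ h2⟩
  · rintro ⟨h1, h2⟩
    by_cases hw : w = a
    · subst hw; exact ⟨ReflTransGen.refl, ReflTransGen.refl⟩
    · rcases aux_rtg E v t' hter' h1 with h3 | h3
      · rcases aux_rtg E v t' hter' h2 with h4 | h4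
        · exact ⟨h3, h4⟩
        · subst h4; exact absurd (aux_term E _ hter' h1) hw
      · subst h3; exact absurd (aux_term E _ hter' h2).symm hw

theorem aux_lt {V : Type*} [Fintype V] (f : V → V) (v0 v : V) (k : ℕ) (hk : f^[k] v0 = v)
    (hmin : ∀ j < k, f^[j] v0 ≠ v) : k < Fintype.card V := by
  have key : ∀ a b : ℕ, a < b → b ≤ k → f^[a] v0 ≠ f^[b] v0 := by
    intro a b hab hb h
    apply hmin ((k - b) + a) (by omega)
    rw [Function.iterate_add_apply, h, ← Function.iterate_add_apply, Nat.sub_add_cancel hb, hk]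
  have hinj : Function.Injective (fun j : Fin (k+1) => f^[j.1] v0) := by
    intro a b h
    rcases lt_trichotomy a.1 b.1 with hl | hl | hl
    · exact absurd h (key _ _ hl (by omega))
    · exact Fin.ext hl
    · exact absurd h.symm (key _ _ hl (by omega))
  have := Fintype.card_le_of_injective _ hinj
  simp at this
  omega

theorem aux_agree {V : Type*} (f g : V → V) (v0 v : V) (hfg : ∀ a, a ≠ v → g a = f a) (k : ℕ)
    (hmin : ∀ j < k, f^[j] v0 ≠ v) : g^[k] v0 = f^[k] v0 := by
  induction k with
  | zero => rfl
  | succ k ih =>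
    rw [Function.iterate_succ_apply', Function.iterate_succ_apply',
      ih fun j hj => hmin j (by omega)]
    exact hfg _ (hmin k (by omega))

theorem aux_end {V : Type*} (f : V → V) (v0 v t : V) (k N : ℕ) (hk : f^[k] v0 = v)
    (hv : f v = t) (hft : f t = t) (hN : k < N) : f^[N] v0 = t := by
  obtain ⟨m, rfl⟩ : ∃ m, N = m + (k + 1) := ⟨N - (k+1), by omega⟩
  rw [Function.iterate_add_apply, Function.iterate_succ_apply', hk, hv]
  exact Function.iterate_fixed hft m

/-- Deleting the worse of two terminal moves creates no new Nash equilibrium: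
if position `v` of player `i` has two terminal moves `(v,t)` and `(v,t')` with
`u(i,t) > u(i,t')`, then every Nash equilibrium of the game obtained by
deleting the edge `(v,t')` is also a Nash equilibrium of the original game.
(In particular, if the original game is NE-free, so is the reduced game.) -/
theorem delete_bad_terminal_move_no_new_NE {V : Type*} [Fintype V]
    (E : V → V → Prop) {n : ℕ} (control : V → Fin n) (v0 : V)
    (u : Fin n → Set V → ℝ) (v t t' : V) (i : Fin n)
    (hvi : control v = i) (ht : E v t) (ht' : E v t') (htt' : t ≠ t')
    (hter : isTerminal E t) (hter' : isTerminal E t')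
    (hu : u i (scc E t) > u i (scc E t')) :
    ∀ x : V → V,
      ValidProfile (fun a b => E a b ∧ ¬ (a = v ∧ b = t')) x →
      IsNE (fun a b => E a b ∧ ¬ (a = v ∧ b = t')) control v0 u x →
      ValidProfile E x ∧ IsNE E control v0 u x := by
  classical
  intro x hx hNE
  have hT : ∀ a, isTerminal (fun a b => E a b ∧ ¬ (a = v ∧ b = t')) a ↔ isTerminal E a := by
    intro a
    constructor
    · intro h w hw
      by_cases hav : a = v
      · subst hav; exact h t ⟨ht, fun h => htt' h.2⟩
      · exact h w ⟨hw, fun h => hav h.1⟩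
    · intro h w hw
      exact h w hw.1
  have hout : ∀ s, outcome (fun a b => E a b ∧ ¬ (a = v ∧ b = t')) v0 s = outcome E v0 s :=
    fun s => aux_scc E v t' hter' _
  have hvn : ¬ isTerminal E v := fun h => h t ht
  have hvt : t ≠ v := fun h => hvn (h ▸ hter)
  have hlift : ∀ s, ValidProfile E s → s v ≠ t' →
      ValidProfile (fun a b => E a b ∧ ¬ (a = v ∧ b = t')) s := by
    intro s hs hsv a
    refine ⟨fun h => (hs a).1 ((hT a).1 h), fun h => ⟨(hs a).2 (fun h' => h ((hT a).2 h')), ?_⟩⟩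
    rintro ⟨rfl, h2⟩
    exact hsv h2
  refine ⟨fun a => ⟨fun h => (hx a).1 ((hT a).2 h),
    fun h => ((hx a).2 (fun h' => h ((hT a).1 h'))).1⟩, ?_⟩
  intro j x' hx' hag
  by_cases hxv : x' v = t'
  · have hxv' : x v ≠ t' := fun h =>
      ((hx v).2 (fun h' => hvn ((hT v).1 h'))).2 ⟨rfl, h⟩
    have hj : control v = j := by
      by_contra hc
      exact hxv' ((hag v hc).symm.trans hxv)
    have hij : j = i := hj.symm.trans hvi
    subst hij
    set g := Function.update x' v t with hg
    have hgv : g v = t := by simp [hg]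
    have hgo : ∀ a, a ≠ v → g a = x' a := fun a ha => by simp [hg, ha]
    have hgval : ValidProfile E g := by
      intro a
      by_cases ha : a = v
      · subst ha
        exact ⟨fun h => absurd h hvn, fun _ => hgv ▸ ht⟩
      · rw [hgo a ha]; exact hx' a
    have h1 := hNE j g (hlift g hgval (by rw [hgv]; exact htt')) (by
      intro a ha
      rw [hgo a (fun h => ha (h ▸ hj))]
      exact hag a ha)
    rw [hout, hout] at h1
    refine ge_trans h1 ?_
    by_cases hex : ∃ k, x'^[k] v0 = v
    · have hk := Nat.find_spec hex
      have hmin : ∀ m < Nat.find hex, x'^[m] v0 ≠ v := fun m hm => Nat.find_min hex hm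
      have hlt := aux_lt x' v0 v _ hk hmin
      have hgk := (aux_agree x' g v0 v hgo _ hmin).trans hk
      have e1 := aux_end x' v0 v t' _ _ hk hxv ((hx' t').1 hter') hlt
      have e2 := aux_end g v0 v t _ _ hgk hgv ((hgval t).1 hter) hlt
      unfold outcome
      rw [e1, e2]
      exact hu.le
    · push Not at hex
      unfold outcome
      rw [aux_agree x' g v0 v hgo _ fun m _ => hex m]
  · have h1 := hNE j x' (hlift x' hx' hxv) hag
    rwa [hout, hout] at h1
end
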